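/- Let p be a prime with p ≡ 1 or 169 (mod 240). Then p is representable by x²+150y² if and only if p is representable by x²+960y². Let p be a prime with p ≡ 49 or 121 (mod 240). Then p is representable by exactly one of the quadratic forms x²+150y² and x²+960y². -/

import Mathlib

/-!
Write `p = u² + 6v²` and `p = a² + 240c²`. Exactly one of `u`, `v` is divisible by `5`, and `p` is
of the form `x² + 150y²` when it is `v`; it is of the form `x² + 960y²` when `c` is even. The two
representations give a point `(a, 4c, u, v)` of the quadric `a² + 15b² = u² + 6v²`, whose
discriminant is `10` up to squares. If `L = 0` is the tangent plane at a rational point, the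
restriction of the quadratic form to that plane makes `L` times another linear form a norm from
`ℚ(√10)`, so that the Jacobi symbol of `10` modulo `|L|` cannot be `-1`. For the tangent plane at
`(4, 1, 5, 1)` the symbol depends only on `L²` modulo `80`, which in turn depends only on `p`, the
parity of `c` and which of `u`, `v` is divisible by `5`.
-/

open scoped NumberTheorySymbols

lemma sq_emod_three (x : ℤ) : x ^ 2 % 3 = 0 ∧ x % 3 = 0 ∨ x ^ 2 % 3 = 1 := by
  have : x % 3 = 0 ∨ x % 3 = 1 ∨ x % 3 = 2 := by omega
  rcases this with h | h | h <;> simp [pow_two, Int.mul_emod, h]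

lemma sq_emod_five (x : ℤ) : x ^ 2 % 5 = 0 ∧ x % 5 = 0 ∨
    (x ^ 2 % 5 = 1 ∨ x ^ 2 % 5 = 4) ∧ x % 5 ≠ 0 := by
  have : x % 5 = 0 ∨ x % 5 = 1 ∨ x % 5 = 2 ∨ x % 5 = 3 ∨ x % 5 = 4 := by omega
  rcases this with h | h | h | h | h <;> simp [pow_two, Int.mul_emod, h]

lemma sq_emod_sixteen (x : ℤ) : x ^ 2 % 16 = 0 ∧ x % 4 = 0 ∨ x ^ 2 % 16 = 4 ∧ x % 4 = 2 ∨
    (x ^ 2 % 16 = 1 ∨ x ^ 2 % 16 = 9) ∧ x % 2 = 1 := by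
  have hsq : x ^ 2 % 16 = (x % 16) ^ 2 % 16 := by simp [pow_two, Int.mul_emod]
  have h4 : x % 4 = x % 16 % 4 := by omega
  have h2 : x % 2 = x % 16 % 2 := by omega
  rw [hsq, h4, h2]
  have hnonneg : 0 ≤ x % 16 := by omega
  have hlt : x % 16 < 16 := by omega
  generalize x % 16 = r at *
  interval_cases r <;> simp

/-- Thue's lemma. -/
lemma exists_small_dvd_sub_mul {n X Y : ℕ} [NeZero n] (hn : n < (X + 1) * (Y + 1)) (s : ℤ) :
    ∃ x y : ℤ, (x ≠ 0 ∨ y ≠ 0) ∧ |x| ≤ X ∧ |y| ≤ Y ∧ (n : ℤ) ∣ x - s * y := by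
  obtain ⟨⟨i, j⟩, hij, ⟨k, l⟩, hkl, hne, heq⟩ :=
    Finset.exists_ne_map_eq_of_card_lt_of_maps_to
      (s := Finset.range (X + 1) ×ˢ Finset.range (Y + 1)) (t := (Finset.univ : Finset (ZMod n)))
      (f := fun q => (q.1 : ZMod n) - (s : ZMod n) * (q.2 : ZMod n))
      (by simpa [ZMod.card] using hn) (by simp)
  simp only [Finset.mem_product, Finset.mem_range] at hij hkl heq
  refine ⟨(i : ℤ) - k, (j : ℤ) - l, ?_, by rw [abs_le]; omega, by rw [abs_le]; omega, ?_⟩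
  · contrapose! hne
    exact Prod.ext (by omega) (by omega)
  · rw [← ZMod.intCast_zmod_eq_zero_iff_dvd]
    push_cast
    linear_combination heq

lemma lt_sqrt_mul_add_one_mul_sqrt_div_add_one {m n : ℕ} (hm : 0 < m) :
    n < ((m * n).sqrt + 1) * ((n / m).sqrt + 1) := by
  have hX : m * n < ((m * n).sqrt + 1) ^ 2 := Nat.lt_succ_sqrt' _
  have hY : n < ((n / m).sqrt + 1) ^ 2 * m := (Nat.div_lt_iff_lt_mul hm).1 (Nat.lt_succ_sqrt' _)
  refine lt_of_pow_lt_pow_left₀ 2 (Nat.zero_le _) (lt_of_mul_lt_mul_left ?_ hm.le)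
  calc m * n ^ 2 = m * n * n := by ring
    _ < ((m * n).sqrt + 1) ^ 2 * (((n / m).sqrt + 1) ^ 2 * m) := Nat.mul_lt_mul'' hX hY
    _ = m * (((m * n).sqrt + 1) * ((n / m).sqrt + 1)) ^ 2 := by ring

lemma exists_sq_add_mul_sq_eq_mul {n d m : ℕ} [NeZero n] (hd : 0 < d) (hm : 0 < m)
    (hsq : IsSquare ((-d : ℤ) : ZMod n)) :
    ∃ x y k : ℤ, 0 < k ∧ m * k ≤ m ^ 2 + d ∧ x ^ 2 + d * y ^ 2 = n * k := by
  obtain ⟨r, hr⟩ := hsq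
  obtain ⟨s, rfl⟩ := ZMod.intCast_surjective r
  obtain ⟨x, y, hxy, hx, hy, hdvd⟩ :=
    exists_small_dvd_sub_mul (lt_sqrt_mul_add_one_mul_sqrt_div_add_one (n := n) hm) s
  have hs : (n : ℤ) ∣ s ^ 2 + d := by
    rw [← ZMod.intCast_zmod_eq_zero_iff_dvd]
    push_cast at hr ⊢
    linear_combination -hr
  obtain ⟨k, hk⟩ : (n : ℤ) ∣ x ^ 2 + d * y ^ 2 := by
    rw [show x ^ 2 + d * y ^ 2 = (x - s * y) * (x + s * y) + (s ^ 2 + d) * y ^ 2 by ring]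
    exact dvd_add (hdvd.mul_right _) (hs.mul_right _)
  have hn : (0 : ℤ) < n := by exact_mod_cast NeZero.pos n
  have hpos : 0 < x ^ 2 + d * y ^ 2 := by
    rcases hxy with h | h <;> positivity
  have hx2 : x ^ 2 ≤ m * n := by
    have hsqrt : ((m * n).sqrt : ℤ) ^ 2 ≤ m * n := by exact_mod_cast Nat.sqrt_le' (m * n)
    exact (sq_le_sq' (abs_le.1 hx).1 (abs_le.1 hx).2).trans hsqrt
  have hy2 : m * y ^ 2 ≤ n := by
    have hsqrt : (m : ℤ) * ((n / m).sqrt : ℤ) ^ 2 ≤ n := by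
      exact_mod_cast (Nat.mul_le_mul_left m (Nat.sqrt_le' (n / m))).trans (Nat.mul_div_le n m)
    have hyY : y ^ 2 ≤ ((n / m).sqrt : ℤ) ^ 2 := sq_le_sq' (abs_le.1 hy).1 (abs_le.1 hy).2
    exact (mul_le_mul_of_nonneg_left hyY (Int.natCast_nonneg m)).trans hsqrt
  refine ⟨x, y, k, pos_of_mul_pos_right (hk ▸ hpos) hn.le, le_of_mul_le_mul_left ?_ hn, hk⟩
  calc (n : ℤ) * (m * k) = m * (x ^ 2 + d * y ^ 2) := by rw [hk]; ring
    _ = m * x ^ 2 + d * (m * y ^ 2) := by ring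
    _ ≤ m * (m * n) + d * n := by gcongr
    _ = n * (m ^ 2 + d) := by ring

lemma exists_eq_sq_add_six_mul_sq {p : ℕ} (hp : p.Prime) (h24 : p % 24 = 1) :
    ∃ u v : ℤ, (p : ℤ) = u ^ 2 + 6 * v ^ 2 := by
  have : Fact p.Prime := ⟨hp⟩
  have hJ : J(-6 | p) = 1 := by
    rw [jacobiSym.mod_right _ (by rw [Nat.odd_iff]; omega)]
    norm_num [h24]
  obtain ⟨x, y, k, hk0, hk, h⟩ := exists_sq_add_mul_sq_eq_mul (d := 6) (m := 2)
    (by norm_num) (by norm_num) (by exact_mod_cast ZMod.isSquare_of_jacobiSym_eq_one hJ)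
  push_cast at hk h
  have hk5 : k ≤ 5 := by omega
  have hx3 := sq_emod_three x
  interval_cases k
  · exact ⟨x, y, by omega⟩
  · omega
  · obtain ⟨x', rfl⟩ : 3 ∣ x := by omega
    have := sq_emod_three y
    ring_nf at h this
    omega
  · have := sq_emod_sixteen x
    have := sq_emod_sixteen y
    obtain ⟨x', rfl⟩ : 2 ∣ x := by omega
    obtain ⟨y', rfl⟩ : 2 ∣ y := by omega
    exact ⟨x', y', by linarith⟩
  · omega

lemma exists_eq_sq_add_fifteen_mul_sq {p : ℕ} (hp : p.Prime) (h24 : p % 24 = 1)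
    (h5 : p % 5 = 1 ∨ p % 5 = 4) : ∃ a b : ℤ, (p : ℤ) = a ^ 2 + 15 * b ^ 2 := by
  have : Fact p.Prime := ⟨hp⟩
  have hJ : J(-15 | p) = 1 := by
    rw [jacobiSym.mod_right _ (by rw [Nat.odd_iff]; omega)]
    have : p % 60 = 1 ∨ p % 60 = 49 := by omega
    rcases this with h | h <;> norm_num [h]
  obtain ⟨x, y, k, hk0, hk, h⟩ := exists_sq_add_mul_sq_eq_mul (d := 15) (m := 4)
    (by norm_num) (by norm_num) (by exact_mod_cast ZMod.isSquare_of_jacobiSym_eq_one hJ)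
  push_cast at hk h
  have hk' : k = 1 ∨ k = 4 ∨ k = 6 := by
    have := sq_emod_three x
    have := sq_emod_five x
    have : k ≤ 7 := by omega
    interval_cases k <;> omega
  have hx := sq_emod_sixteen x
  have hy := sq_emod_sixteen y
  rcases hk' with rfl | rfl | rfl
  · exact ⟨x, y, by omega⟩
  · obtain ⟨x', rfl⟩ : 2 ∣ x := by omega
    obtain ⟨y', rfl⟩ : 2 ∣ y := by omega
    exact ⟨x', y', by linarith⟩
  · omega

lemma isRelPrime_of_squarefree_sq_add_mul_sq {R : Type*} [CommRing R] {x y d : R}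
    (h : Squarefree (x ^ 2 + d * y ^ 2)) : IsRelPrime x y := by
  rintro q ⟨x', rfl⟩ ⟨y', rfl⟩
  exact h q ⟨x' ^ 2 + d * y' ^ 2, by ring⟩

lemma jacobiSym_ne_neg_one_of_mul_eq_sq_sub_mul_sq {D M N x y : ℤ}
    (h : M * N = x ^ 2 - D * y ^ 2)
    (hcop : ∀ q : ℤ, Prime q → q ∣ M → q ∣ x → q ∣ y → ¬ q ∣ N) :
    J(D | M.natAbs) ≠ -1 := by
  induction hn : M.natAbs using Nat.strong_induction_on generalizing M x y with
  | _ n ih =>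
    subst hn
    intro hJ
    obtain ⟨q, hq, hqM, hJq⟩ := jacobiSym.eq_neg_one_at_prime_divisor_of_eq_neg_one hJ
    have : Fact q.Prime := ⟨hq⟩
    have hq' : Prime (q : ℤ) := Nat.prime_iff_prime_int.1 hq
    replace hqM : (q : ℤ) ∣ M := Int.natCast_dvd.2 hqM
    obtain ⟨⟨x', rfl⟩, ⟨y', rfl⟩⟩ :=
      jacobiSym.prime_dvd_of_eq_neg_one hJq (h ▸ hqM.mul_right N)
    have hqN : ¬ (q : ℤ) ∣ N := hcop q hq' hqM (dvd_mul_right _ _) (dvd_mul_right _ _)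
    obtain ⟨M', rfl⟩ : (q : ℤ) ^ 2 ∣ M :=
      ((hq'.coprime_iff_not_dvd.2 hqN).pow_left (m := 2)).dvd_of_dvd_mul_right
        ⟨x' ^ 2 - D * y' ^ 2, by rw [h]; ring⟩
    have hM' : M'.natAbs ≠ 0 := by
      intro hzero
      simp [Int.natAbs_mul, hzero] at hJ
    have : NeZero M'.natAbs := ⟨hM'⟩
    have : NeZero q := ⟨hq.ne_zero⟩
    rw [Int.natAbs_mul, Int.natAbs_pow, Int.natAbs_natCast] at ih hJ
    refine ih M'.natAbs ?_ (x := x') (y := y') ?_ ?_ rfl ?_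
    · exact lt_mul_of_one_lt_left (Nat.pos_of_ne_zero hM') (Nat.one_lt_pow two_ne_zero hq.one_lt)
    · apply mul_left_cancel₀ (pow_ne_zero 2 hq'.ne_zero)
      linear_combination h
    · exact fun r hr hrM hrx hry => hcop r hr (hrM.mul_left _) (hrx.mul_left _) (hry.mul_left _)
    · rwa [jacobiSym.mul_right, jacobiSym.pow_right, hJq, neg_one_sq, one_mul] at hJ

lemma jacobiSym_ten_eq_neg_one {n : ℕ} (hn : n ^ 2 % 80 = 41 ∨ n ^ 2 % 80 = 49) :
    J(10 | n) = -1 := by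
  have hodd : Odd n := by
    rw [← Nat.odd_pow_iff two_ne_zero, Nat.odd_iff]
    omega
  have hsq : n ^ 2 % 80 = (n % 40) ^ 2 % 80 := by
    conv_lhs => rw [← Nat.mod_add_div n 40]
    rw [show (n % 40 + 40 * (n / 40)) ^ 2
      = (n % 40) ^ 2 + 80 * ((n % 40) * (n / 40) + 20 * (n / 40) ^ 2) by ring,
      Nat.add_mul_mod_self_left]
  have hlt : n % 40 < 40 := Nat.mod_lt _ (by norm_num)
  rw [hsq] at hn
  rw [jacobiSym.mod_right _ hodd, show 4 * (10 : ℤ).natAbs = 40 from rfl]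
  generalize n % 40 = r at *
  interval_cases r <;> simp at hn <;> norm_num

/-- The linear form in `(a, b, u, v)` cutting out the tangent plane of the quadric
`a² + 15b² = u² + 6v²` at its point `(4, 1, 5, 1)`. This point is chosen because the value of the
form is odd whenever `b` and `v` are even and `u` is odd. -/
def tangentForm (a b u v : ℤ) : ℤ := 4 * a + 15 * b - 5 * u - 6 * v

-- `(4, 1, 5, 1)` and `(1, 0, 1, 0)` span a hyperbolic plane with orthogonal complement
-- `15X² - 6Y²`.
lemma two_mul_tangentForm_mul_sub {a b u v : ℤ} (h : a ^ 2 + 15 * b ^ 2 = u ^ 2 + 6 * v ^ 2) :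
    2 * tangentForm a b u v * (a - u) = 15 * (b + (a - u)) ^ 2 - 6 * (v + (a - u)) ^ 2 := by
  simp only [tangentForm]
  linear_combination -h

lemma jacobiSym_ten_ne_neg_one {a b u v : ℤ} (h : a ^ 2 + 15 * b ^ 2 = u ^ 2 + 6 * v ^ 2)
    (hab : IsRelPrime a b) (hau : 3 ∣ a - u)
    (hL : IsCoprime (tangentForm a b u v) 10) :
    J(10 | (tangentForm a b u v).natAbs) ≠ -1 := by
  obtain ⟨s, hs⟩ := hau
  obtain rfl : u = a - 3 * s := by omega
  refine jacobiSym_ne_neg_one_of_mul_eq_sq_sub_mul_sq (N := 10 * s)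
    (x := 5 * (b + 3 * s)) (y := v + 3 * s) ?_ ?_
  · refine mul_left_cancel₀ three_ne_zero ?_
    linear_combination 5 * two_mul_tangentForm_mul_sub h
  intro q hq hqL hqx hqy hqN
  have hq10 : ¬ q ∣ 10 := fun hq10 => hq.not_isUnit (hL.isUnit_of_dvd' hqL hq10)
  have hqs : q ∣ 3 * s := ((hq.dvd_or_dvd hqN).resolve_left hq10).mul_left 3
  have hqb : q ∣ b := (dvd_add_left hqs).1 <|
    (hq.dvd_or_dvd hqx).resolve_left fun hq5 => hq10 (hq5.mul_left 2)
  have hqv : q ∣ v := (dvd_add_left hqs).1 hqy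
  have hqa : q ∣ a := by
    rw [show a = 15 * b + 5 * (3 * s) - 6 * v - tangentForm a b (a - 3 * s) v by
      simp only [tangentForm]; ring]
    exact (((hqb.mul_left 15).add (hqs.mul_left 5)).sub (hqv.mul_left 6)).sub hqL
  exact hq.not_isUnit (hab hqa hqb)

lemma tangentForm_sq_emod_eighty_ne {a b u v : ℤ} (h : a ^ 2 + 15 * b ^ 2 = u ^ 2 + 6 * v ^ 2)
    (hab : IsRelPrime a b) (hau : 3 ∣ a - u) :
    ¬ (tangentForm a b u v ^ 2 % 80 = 41 ∨
      tangentForm a b u v ^ 2 % 80 = 49) := by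
  intro hmod
  have hcop : IsCoprime (tangentForm a b u v) 10 := by
    rw [← IsCoprime.pow_left_iff two_pos]
    generalize tangentForm a b u v ^ 2 = n at hmod
    rcases hmod with hn | hn
    · exact ⟨1, -(8 * (n / 80) + 4), by omega⟩
    · exact ⟨-1, 8 * (n / 80) + 5, by omega⟩
  refine jacobiSym_ten_ne_neg_one h hab hau hcop (jacobiSym_ten_eq_neg_one ?_)
  zify
  simpa only [sq_abs] using hmod

lemma tangentForm_sq_modEq_sixteen {n a c u w : ℤ} (hn : n % 8 = 1)
    (ha : n = a ^ 2 + 15 * (4 * c) ^ 2) (hu : n = u ^ 2 + 6 * (2 * w) ^ 2) :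
    tangentForm a (4 * c) u (2 * w) ^ 2 ≡ n + 8 * c [ZMOD 16] := by
  rw [mul_pow] at ha
  have ha2 : ¬ Even a := by have := sq_emod_sixteen a; rw [Int.even_iff]; omega
  have hu2 : ¬ Even u := by have := sq_emod_sixteen u; rw [Int.even_iff]; omega
  obtain ⟨j, hj⟩ : 2 ∣ 3 * u ^ 2 - 5 * (a + 15 * c - 3 * w) * u - 3 * w ^ 2 - c := by
    rw [← even_iff_two_dvd]
    simp only [Int.even_sub, Int.even_add, Int.even_mul, Int.even_pow, ha2, hu2,
      show ¬ Even (3 : ℤ) by decide, show ¬ Even (5 : ℤ) by decide,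
      show ¬ Even (15 : ℤ) by decide]
    tauto
  refine (Int.modEq_iff_dvd.2 ⟨(a + 15 * c - 3 * w) ^ 2 + j, ?_⟩).symm
  simp only [tangentForm]
  linear_combination 8 * hj - hu

lemma tangentForm_modEq_five (a b u v : ℤ) : tangentForm a b u v ≡ -(a + v) [ZMOD 5] :=
  Int.modEq_iff_dvd.2 ⟨u - a - 3 * b + v, by simp only [tangentForm]; ring⟩

lemma tangentForm_sq_modEq_five_of_dvd {n a b u v : ℤ} (ha : n = a ^ 2 + 15 * b ^ 2)
    (hv : 5 ∣ v) : tangentForm a b u v ^ 2 ≡ n [ZMOD 5] := by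
  obtain ⟨v', rfl⟩ := hv
  refine ((tangentForm_modEq_five a b u (5 * v')).pow 2).trans (Int.modEq_iff_dvd.2 ?_)
  exact ⟨3 * b ^ 2 - 2 * a * v' - 5 * v' ^ 2, by rw [ha]; ring⟩

lemma tangentForm_sq_modEq_neg_five_of_dvd {n a b u v : ℤ} (ha : n = a ^ 2 + 15 * b ^ 2)
    (huv : n = u ^ 2 + 6 * v ^ 2) (hu : 5 ∣ u) (hav : ¬ 5 ∣ a + v) :
    tangentForm a b u v ^ 2 ≡ -n [ZMOD 5] := by
  obtain ⟨u', rfl⟩ := hu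
  have hprod : 5 ∣ (a - v) * (a + v) :=
    ⟨v ^ 2 + 5 * u' ^ 2 - 3 * b ^ 2, by linear_combination huv - ha⟩
  have prime_five : Prime (5 : ℤ) := by norm_num
  obtain ⟨k, hk⟩ : 5 ∣ a - v := (prime_five.dvd_or_dvd hprod).resolve_right hav
  obtain rfl : a = v + 5 * k := by omega
  refine ((tangentForm_modEq_five _ b _ v).pow 2).trans (Int.modEq_iff_dvd.2 ?_)
  exact ⟨-5 * u' ^ 2 - 2 * v ^ 2 - 4 * v * k - 5 * k ^ 2, by rw [huv]; ring⟩

lemma exists_sq_eq_sq_and_dvd_sub {R : Type*} [CommRing R] {q a u : R} (hq : Prime q)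
    (h : q ∣ a ^ 2 - u ^ 2) : ∃ u', u' ^ 2 = u ^ 2 ∧ q ∣ a - u' := by
  rw [sq_sub_sq] at h
  rcases hq.dvd_or_dvd h with hadd | hsub
  · exact ⟨-u, neg_sq u, by rwa [sub_neg_eq_add]⟩
  · exact ⟨u, rfl, hsub⟩

lemma exists_sq_eq_sq_and_not_dvd_add {R : Type*} [CommRing R] {q a : R} (ha : ¬ q ∣ 2 * a)
    (v : R) : ∃ v', v' ^ 2 = v ^ 2 ∧ ¬ q ∣ a + v' := by
  by_cases hadd : q ∣ a + v
  · refine ⟨-v, neg_sq v, fun hsub => ha ?_⟩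
    convert hadd.add hsub using 1
    ring
  · exact ⟨v, rfl, hadd⟩

lemma not_five_dvd_right_iff_five_dvd_left {n u v : ℤ} (hn : n % 5 = 1 ∨ n % 5 = 4)
    (h : n = u ^ 2 + 6 * v ^ 2) : ¬ 5 ∣ v ↔ 5 ∣ u := by
  have := sq_emod_five u
  have := sq_emod_five v
  omega

lemma five_dvd_iff_emod_eighty {n a c u v : ℤ} (h24 : n % 24 = 1) (h5 : n % 5 = 1 ∨ n % 5 = 4)
    (hac : IsRelPrime a (4 * c)) (ha : n = a ^ 2 + 15 * (4 * c) ^ 2)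
    (hu : n = u ^ 2 + 6 * v ^ 2) :
    5 ∣ v ↔ (n + 40 * c) % 80 = 1 ∨ (n + 40 * c) % 80 = 9 := by
  have ha5 : ¬ 5 ∣ 2 * a := by have := sq_emod_five a; omega
  obtain ⟨u', hu', hau⟩ := exists_sq_eq_sq_and_dvd_sub (a := a) (u := u) Int.prime_three (by omega)
  obtain ⟨v', hv', hav⟩ := exists_sq_eq_sq_and_not_dvd_add ha5 v
  have hdvd : 5 ∣ v ↔ 5 ∣ v' := by
    have := sq_emod_five v
    have := sq_emod_five v'
    omega
  rw [← hu', ← hv'] at hu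
  rw [hdvd]
  obtain ⟨w, rfl⟩ : 2 ∣ v' := by
    have := sq_emod_sixteen u'
    have := sq_emod_sixteen v'
    omega
  have h16 := tangentForm_sq_modEq_sixteen (by omega) ha hu
  have hne := tangentForm_sq_emod_eighty_ne (ha.symm.trans hu) hac hau
  have hdvd_u := not_five_dvd_right_iff_five_dvd_left h5 hu
  by_cases hw : 5 ∣ 2 * w
  · have hL := tangentForm_sq_modEq_five_of_dvd (u := u') ha hw
    simp only [Int.ModEq] at h16 hL
    omega
  · have hL := tangentForm_sq_modEq_neg_five_of_dvd ha hu (hdvd_u.1 hw) hav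
    simp only [Int.ModEq] at h16 hL
    omega

section PrimeRepresentations

variable {p : ℕ} (hp : p.Prime) (h24 : p % 24 = 1) (h5 : p % 5 = 1 ∨ p % 5 = 4)
include hp h24 h5

lemma exists_eq_sq_add_two_hundred_forty_mul_sq :
    ∃ a c : ℤ, (p : ℤ) = a ^ 2 + 240 * c ^ 2 := by
  obtain ⟨a, b, hab⟩ := exists_eq_sq_add_fifteen_mul_sq hp h24 h5
  obtain ⟨c, rfl⟩ : 4 ∣ b := by
    have := sq_emod_sixteen a
    have := sq_emod_sixteen b
    omega
  exact ⟨a, c, by rw [hab]; ring⟩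

lemma exists_eq_sq_add_one_hundred_fifty_mul_sq_iff {a c : ℤ}
    (hac : (p : ℤ) = a ^ 2 + 240 * c ^ 2) :
    (∃ x y : ℤ, (p : ℤ) = x ^ 2 + 150 * y ^ 2) ↔
      (p + 40 * c) % 80 = 1 ∨ (p + 40 * c) % 80 = 9 := by
  have hac' : (p : ℤ) = a ^ 2 + 15 * (4 * c) ^ 2 := by rw [hac]; ring
  have hcop : IsRelPrime a (4 * c) := isRelPrime_of_squarefree_sq_add_mul_sq
    (hac' ▸ (Nat.prime_iff_prime_int.1 hp).squarefree)
  have hiff {u v : ℤ} (huv : (p : ℤ) = u ^ 2 + 6 * v ^ 2) :=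
    five_dvd_iff_emod_eighty (by omega) (by omega) hcop hac' huv
  constructor
  · rintro ⟨x, y, hxy⟩
    exact (hiff (v := 5 * y) (by rw [hxy]; ring)).1 (dvd_mul_right 5 y)
  · intro hc
    obtain ⟨u, v, huv⟩ := exists_eq_sq_add_six_mul_sq hp h24
    obtain ⟨y, rfl⟩ := (hiff huv).2 hc
    exact ⟨u, y, by rw [huv]; ring⟩

lemma exists_eq_sq_add_nine_hundred_sixty_mul_sq_iff {a c : ℤ}
    (hac : (p : ℤ) = a ^ 2 + 240 * c ^ 2) :
    (∃ x y : ℤ, (p : ℤ) = x ^ 2 + 960 * y ^ 2) ↔ 2 ∣ c := by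
  constructor
  · rintro ⟨x, y, hxy⟩
    have hxy' : (p : ℤ) = x ^ 2 + 240 * (2 * y) ^ 2 := by rw [hxy]; ring
    have hiff := (exists_eq_sq_add_one_hundred_fifty_mul_sq_iff hp h24 h5 hac).symm.trans
      (exists_eq_sq_add_one_hundred_fifty_mul_sq_iff hp h24 h5 hxy')
    omega
  · rintro ⟨y, rfl⟩
    exact ⟨a, y, by rw [hac]; ring⟩

end PrimeRepresentations

theorem kaplansky_like_3 (p : ℕ) (hp : p.Prime) :
    ((p % 240 = 1 ∨ p % 240 = 169) → ((∃ x y : ℤ, (p : ℤ) = x ^ 2 + 150 * y ^ 2) ↔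
      (∃ x y : ℤ, (p : ℤ) = x ^ 2 + 960 * y ^ 2))) ∧
    ((p % 240 = 49 ∨ p % 240 = 121) → Xor' (∃ x y : ℤ, (p : ℤ) = x ^ 2 + 150 * y ^ 2)
      (∃ x y : ℤ, (p : ℤ) = x ^ 2 + 960 * y ^ 2)) := by
  refine ⟨fun h => ?_, fun h => ?_⟩
  all_goals
    have h24 : p % 24 = 1 := by omega
    have h5 : p % 5 = 1 ∨ p % 5 = 4 := by omega
    obtain ⟨a, c, hac⟩ := exists_eq_sq_add_two_hundred_forty_mul_sq hp h24 h5
    rw [exists_eq_sq_add_one_hundred_fifty_mul_sq_iff hp h24 h5 hac,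
      exists_eq_sq_add_nine_hundred_sixty_mul_sq_iff hp h24 h5 hac]
  · omega
  · refine (xor_iff_not_iff _ _).2 ?_
    omega
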